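/- Let G be a countable infinite discrete group and k ≥ 2 an integer. If the Bernoulli shift G ↷ ([k]^G, ν_k^G), where [k] is a k-element set and ν_k the uniform probability measure on it, is 𝕋-cocycle superrigid, then H¹(G, ℤG/kℤG) = 0. -/

import Mathlib

open MeasureTheory

noncomputable section

namespace AlgActCohomology

/-- The Borel σ-algebra on the circle group `𝕋 = {z ∈ ℂ : |z| = 1}`. -/
noncomputable instance : MeasurableSpace Circle := borel Circle
instance : BorelSpace Circle := ⟨rfl⟩

variable {G X : Type*}

/-- The diagonal action on a product. -/
def diag (a : G → X → X) : G → X × X → X × X := fun g p => (a g p.1, a g p.2)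

/-- An action is ergodic if every measurable set invariant under every group element
has measure 0 or 1. -/
def IsErgodicAction [MeasurableSpace X] (a : G → X → X) (μ : Measure X) : Prop :=
  ∀ s : Set X, MeasurableSet s → (∀ g : G, a g ⁻¹' s = s) → μ s = 0 ∨ μ s = 1

/-- An action is weakly mixing if the diagonal action on the square
(with the product measure) is ergodic. -/
def IsWeaklyMixing [MeasurableSpace X] (a : G → X → X) (μ : Measure X) : Prop :=
  IsErgodicAction (diag a) (μ.prod μ)

/-- A (p.m.p.) group action: `a : G → X → X` is an action of `G` and every `a g`
is measure preserving. -/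
structure IsPmpAction [Group G] [MeasurableSpace X] (a : G → X → X) (μ : Measure X) :
    Prop where
  act_one : ∀ x, a 1 x = x
  act_mul : ∀ g h x, a (g * h) x = a g (a h x)
  measurePreserving : ∀ g, MeasurePreserving (a g) μ μ

/-- An algebraic action: an action of `G` by continuous (automatically bijective)
additive automorphisms of a compact abelian group `X`. -/
structure IsAlgebraicAction [Group G] [AddCommGroup X] [TopologicalSpace X]
    (a : G → X → X) : Prop where
  act_one : ∀ x, a 1 x = x
  act_mul : ∀ g h x, a (g * h) x = a g (a h x)
  continuous : ∀ g, Continuous (a g)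
  act_add : ∀ g x y, a g (x + y) = a g x + a g y

/-- A measurable `𝕋`-valued 1-cocycle for an action. -/
def IsCocycle1 [Group G] [MeasurableSpace X] (a : G → X → X) (μ : Measure X)
    (c : G → X → Circle) : Prop :=
  (∀ g, Measurable (c g)) ∧ ∀ g h : G, ∀ᵐ x ∂μ, c (g * h) x = c g x * c h (a g⁻¹ x)

/-- An action is `𝕋`-cocycle superrigid if every measurable `𝕋`-valued 1-cocycle is
cohomologous to a group homomorphism `G → 𝕋`. -/
def IsCocycleSuperrigid [Group G] [MeasurableSpace X] (a : G → X → X) (μ : Measure X) :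
    Prop :=
  ∀ c : G → X → Circle, IsCocycle1 a μ c →
    ∃ (lam : G →* Circle) (b : X → Circle), Measurable b ∧
      ∀ g : G, ∀ᵐ x ∂μ, c g x = lam g * (b (a g⁻¹ x) * (b x)⁻¹)

section Char

variable (X) [AddCommGroup X] [TopologicalSpace X]

/-- The Pontryagin dual `X̂` of a compact abelian group `X`: the group of continuous
characters `X → 𝕋`, as a subgroup of the group of all functions `X → 𝕋`. -/
def charGroup : Subgroup (X → Circle) where
  carrier := {χ | Continuous χ ∧ ∀ x y, χ (x + y) = χ x * χ y}
  one_mem' := ⟨continuous_const, fun _ _ => (one_mul 1).symm⟩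
  mul_mem' := fun h1 h2 => ⟨h1.1.mul h2.1, fun x y => by
    simp only [Pi.mul_apply, h1.2 x y, h2.2 x y]; exact mul_mul_mul_comm _ _ _ _⟩
  inv_mem' := fun h => ⟨h.1.inv, fun x y => by
    simp only [Pi.inv_apply, h.2 x y, mul_inv]⟩

end Char

section Degree1

variable [Group G] [AddCommGroup X] [TopologicalSpace X]

/-- `Z¹(G, X̂)`: 1-cocycles of `G` with coefficients in the dual module `X̂`,
where `(g • χ) x = χ (a g⁻¹ x)`. -/
def modZ1 (a : G → X → X) : Subgroup (G → charGroup X) where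
  carrier := {c | ∀ (g h : G) (x : X),
    ((c (g * h) : X → Circle)) x = (c h : X → Circle) (a g⁻¹ x) * (c g : X → Circle) x}
  one_mem' := by
    intro g h x
    simp
  mul_mem' := by
    intro c₁ c₂ h1 h2 g h x
    simp only [Pi.mul_apply, Subgroup.coe_mul]
    rw [h1 g h x, h2 g h x]
    ac_rfl
  inv_mem' := by
    intro c hc g h x
    simp only [Pi.inv_apply, InvMemClass.coe_inv]
    rw [hc g h x, mul_inv]

/-- `B¹(G, X̂)`: 1-coboundaries. -/
def modB1 (a : G → X → X) : Subgroup (G → charGroup X) where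
  carrier := {c | ∃ χ : charGroup X, ∀ (g : G) (x : X),
    (c g : X → Circle) x = (χ : X → Circle) (a g⁻¹ x) * ((χ : X → Circle) x)⁻¹}
  one_mem' := ⟨1, by intro g x; simp⟩
  mul_mem' := by
    rintro c₁ c₂ ⟨χ₁, h1⟩ ⟨χ₂, h2⟩
    refine ⟨χ₁ * χ₂, fun g x => ?_⟩
    simp only [Pi.mul_apply, Subgroup.coe_mul]
    rw [h1 g x, h2 g x, mul_inv]
    ac_rfl
  inv_mem' := by
    rintro c ⟨χ, h⟩
    refine ⟨χ⁻¹, fun g x => ?_⟩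
    simp only [Pi.inv_apply, InvMemClass.coe_inv]
    rw [h g x, mul_inv, inv_inv]

variable [MeasurableSpace X]

/-- Measurable `𝕋`-valued 1-cocycles for an action, as a subgroup of all maps
`G → X → 𝕋`. -/
def measZ1 (a : G → X → X) (μ : Measure X) : Subgroup (G → X → Circle) where
  carrier := {c | (∀ g, Measurable (c g)) ∧
    ∀ g h : G, ∀ᵐ x ∂μ, c (g * h) x = c g x * c h (a g⁻¹ x)}
  one_mem' := ⟨fun _ => measurable_const, fun g h => ae_of_all _ fun x => by simp⟩
  mul_mem' := by
    rintro c₁ c₂ ⟨m1, h1⟩ ⟨m2, h2⟩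
    refine ⟨fun g => (m1 g).mul (m2 g), fun g h => ?_⟩
    filter_upwards [h1 g h, h2 g h] with x e1 e2
    simp only [Pi.mul_apply]
    rw [e1, e2]
    ac_rfl
  inv_mem' := by
    rintro c ⟨m, hc⟩
    refine ⟨fun g => (m g).inv, fun g h => ?_⟩
    filter_upwards [hc g h] with x e
    simp only [Pi.inv_apply]
    rw [e, mul_inv]

/-- The subgroup of measurable 1-cocycles that are cohomologous to (the cocycle
induced by) a group homomorphism `G → 𝕋`; this is the preimage in `Z¹(G ↷ X; 𝕋)` of
the subgroup `Ψ₁(H¹(G, 𝕋))` of `H¹(G ↷ X; 𝕋)`, so that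
`H¹(G ↷ X; 𝕋)/Ψ₁(H¹(G, 𝕋)) = measZ1 ⧸ measBPsi1`. -/
def measBPsi1 (a : G → X → X) (μ : Measure X) : Subgroup (G → X → Circle) where
  carrier := {c | ∃ (φ : G →* Circle) (b : X → Circle), Measurable b ∧
    ∀ g : G, ∀ᵐ x ∂μ, c g x = φ g * (b (a g⁻¹ x) * (b x)⁻¹)}
  one_mem' := ⟨1, 1, measurable_const, fun g => ae_of_all _ fun x => by simp⟩
  mul_mem' := by
    rintro c₁ c₂ ⟨φ₁, b₁, hb₁, h1⟩ ⟨φ₂, b₂, hb₂, h2⟩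
    refine ⟨φ₁ * φ₂, b₁ * b₂, hb₁.mul hb₂, fun g => ?_⟩
    filter_upwards [h1 g, h2 g] with x e1 e2
    simp only [Pi.mul_apply, MonoidHom.mul_apply]
    rw [e1, e2, mul_inv]
    ac_rfl
  inv_mem' := by
    rintro c ⟨φ, b, hb, h⟩
    refine ⟨φ⁻¹, b⁻¹, hb.inv, fun g => ?_⟩
    filter_upwards [h g] with x e
    simp only [Pi.inv_apply, MonoidHom.inv_apply]
    rw [e, mul_inv, mul_inv, inv_inv]

/-- The measurable cocycle induced by a module cocycle: evaluation of characters. -/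
def ind1 (c : G → charGroup X) : G → X → Circle := fun g => (c g : X → Circle)

end Degree1

section Degree2

variable [Group G]

/-- A `𝕋`-valued 2-cocycle of the group `G` (for the trivial `G`-module `𝕋`). -/
def IsGrpCocycle2 (θ : G → G → Circle) : Prop :=
  ∀ g₁ g₂ g₃ : G, θ g₂ g₃ * (θ (g₁ * g₂) g₃)⁻¹ * θ g₁ (g₂ * g₃) * (θ g₁ g₂)⁻¹ = 1

private lemma mul4 {M : Type*} [CommGroup M] {a₁ b₁ c₁ d₁ a₂ b₂ c₂ d₂ : M}
    (h₁ : a₁ * b₁⁻¹ * c₁ * d₁⁻¹ = 1) (h₂ : a₂ * b₂⁻¹ * c₂ * d₂⁻¹ = 1) :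
    (a₁ * a₂) * (b₁ * b₂)⁻¹ * (c₁ * c₂) * (d₁ * d₂)⁻¹ = 1 := by
  have e : (a₁ * a₂) * (b₁ * b₂)⁻¹ * (c₁ * c₂) * (d₁ * d₂)⁻¹
      = (a₁ * b₁⁻¹ * c₁ * d₁⁻¹) * (a₂ * b₂⁻¹ * c₂ * d₂⁻¹) := by
    simp only [mul_inv]; ac_rfl
  rw [e, h₁, h₂, one_mul]

private lemma inv4 {M : Type*} [CommGroup M] {a b c d : M}
    (h : a * b⁻¹ * c * d⁻¹ = 1) : a⁻¹ * b * c⁻¹ * d = 1 := by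
  have e : a⁻¹ * b * c⁻¹ * d = (a * b⁻¹ * c * d⁻¹)⁻¹ := by
    simp only [mul_inv, inv_inv]; try ac_rfl
  rw [e, h, inv_one]

variable [AddCommGroup X] [TopologicalSpace X]

/-- `Z²(G, X̂)`: 2-cocycles of `G` with coefficients in the dual module `X̂`. -/
def modZ2 (a : G → X → X) : Subgroup (G → G → charGroup X) where
  carrier := {c | ∀ (g₁ g₂ g₃ : G) (x : X),
    (c g₂ g₃ : X → Circle) (a g₁⁻¹ x) * ((c (g₁ * g₂) g₃ : X → Circle) x)⁻¹ *
      (c g₁ (g₂ * g₃) : X → Circle) x * ((c g₁ g₂ : X → Circle) x)⁻¹ = 1}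
  one_mem' := by intro g₁ g₂ g₃ x; simp
  mul_mem' := by
    intro c₁ c₂ h1 h2 g₁ g₂ g₃ x
    simp only [Pi.mul_apply, Subgroup.coe_mul]
    exact mul4 (h1 g₁ g₂ g₃ x) (h2 g₁ g₂ g₃ x)
  inv_mem' := by
    intro c hc g₁ g₂ g₃ x
    simp only [Pi.inv_apply, InvMemClass.coe_inv, inv_inv]
    exact inv4 (hc g₁ g₂ g₃ x)

/-- `B²(G, X̂)`: 2-coboundaries. -/
def modB2 (a : G → X → X) : Subgroup (G → G → charGroup X) where
  carrier := {c | ∃ b : G → charGroup X, ∀ (g h : G) (x : X),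
    (c g h : X → Circle) x =
      (b h : X → Circle) (a g⁻¹ x) * ((b (g * h) : X → Circle) x)⁻¹ * (b g : X → Circle) x}
  one_mem' := ⟨1, by intro g h x; simp⟩
  mul_mem' := by
    rintro c₁ c₂ ⟨b₁, h1⟩ ⟨b₂, h2⟩
    refine ⟨b₁ * b₂, fun g h x => ?_⟩
    simp only [Pi.mul_apply, Subgroup.coe_mul]
    rw [h1 g h x, h2 g h x, mul_inv]
    try ac_rfl
  inv_mem' := by
    rintro c ⟨b, hb⟩
    refine ⟨b⁻¹, fun g h x => ?_⟩
    simp only [Pi.inv_apply, InvMemClass.coe_inv]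
    rw [hb g h x]
    simp only [mul_inv, inv_inv]
    try ac_rfl

variable [MeasurableSpace X]

/-- Measurable `𝕋`-valued 2-cocycles for an action. -/
def measZ2 (a : G → X → X) (μ : Measure X) : Subgroup (G → G → X → Circle) where
  carrier := {c | (∀ g h, Measurable (c g h)) ∧
    ∀ g₁ g₂ g₃ : G, ∀ᵐ x ∂μ,
      c g₂ g₃ (a g₁⁻¹ x) * (c (g₁ * g₂) g₃ x)⁻¹ * c g₁ (g₂ * g₃) x * (c g₁ g₂ x)⁻¹ = 1}
  one_mem' := ⟨fun _ _ => measurable_const, fun g₁ g₂ g₃ => ae_of_all _ fun x => by simp⟩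
  mul_mem' := by
    rintro c₁ c₂ ⟨m1, h1⟩ ⟨m2, h2⟩
    refine ⟨fun g h => (m1 g h).mul (m2 g h), fun g₁ g₂ g₃ => ?_⟩
    filter_upwards [h1 g₁ g₂ g₃, h2 g₁ g₂ g₃] with x e1 e2
    simp only [Pi.mul_apply]
    exact mul4 e1 e2
  inv_mem' := by
    rintro c ⟨m, hc⟩
    refine ⟨fun g h => (m g h).inv, fun g₁ g₂ g₃ => ?_⟩
    filter_upwards [hc g₁ g₂ g₃] with x e
    simp only [Pi.inv_apply, inv_inv]
    exact inv4 e

/-- The subgroup of measurable 2-cocycles that are cohomologous to a constant (in the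
space variable) 2-cocycle coming from a group 2-cocycle `θ : G² → 𝕋`; this is the
preimage in `Z²(G ↷ X; 𝕋)` of the subgroup `Ψ₂(H²(G, 𝕋))` of `H²(G ↷ X; 𝕋)`, so that
`H²(G ↷ X; 𝕋)/Ψ₂(H²(G, 𝕋)) = measZ2 ⧸ measBPsi2`. -/
def measBPsi2 (a : G → X → X) (μ : Measure X) : Subgroup (G → G → X → Circle) where
  carrier := {c | ∃ (θ : G → G → Circle) (b : G → X → Circle), IsGrpCocycle2 θ ∧
    (∀ g, Measurable (b g)) ∧
    ∀ g h : G, ∀ᵐ x ∂μ, c g h x = θ g h * (b h (a g⁻¹ x) * (b (g * h) x)⁻¹ * b g x)}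
  one_mem' := ⟨fun _ _ => 1, fun _ => 1, fun g₁ g₂ g₃ => by simp, fun _ => measurable_const,
    fun g h => ae_of_all _ fun x => by simp⟩
  mul_mem' := by
    rintro c₁ c₂ ⟨θ₁, b₁, hθ₁, hb₁, h1⟩ ⟨θ₂, b₂, hθ₂, hb₂, h2⟩
    refine ⟨fun g h => θ₁ g h * θ₂ g h, fun g => b₁ g * b₂ g,
      fun g₁ g₂ g₃ => mul4 (hθ₁ g₁ g₂ g₃) (hθ₂ g₁ g₂ g₃),
      fun g => (hb₁ g).mul (hb₂ g), fun g h => ?_⟩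
    filter_upwards [h1 g h, h2 g h] with x e1 e2
    simp only [Pi.mul_apply]
    rw [e1, e2]
    simp only [mul_inv]
    ac_rfl
  inv_mem' := by
    rintro c ⟨θ, b, hθ, hb, hc⟩
    refine ⟨fun g h => (θ g h)⁻¹, fun g => (b g)⁻¹,
      fun g₁ g₂ g₃ => by simpa only [inv_inv] using inv4 (hθ g₁ g₂ g₃),
      fun g => (hb g).inv, fun g h => ?_⟩
    filter_upwards [hc g h] with x e
    simp only [Pi.inv_apply]
    rw [e]
    simp only [mul_inv, inv_inv]
    try ac_rfl

/-- The measurable 2-cocycle induced by a module 2-cocycle: evaluation of characters. -/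
def ind2 (c : G → G → charGroup X) : G → G → X → Circle := fun g h => (c g h : X → Circle)

end Degree2


section Bernoulli

/-- The Bernoulli shift action `G ↷ X₀^G`, `(g • x) h = x (g⁻¹ h)`. -/
def bernoulliShift (G X₀ : Type*) [Group G] : G → (G → X₀) → (G → X₀) :=
  fun g x h => x (g⁻¹ * h)

/-- `μ` is the product along `ι` of copies of `μ₀`: it gives every finite-dimensional
cylinder set its product measure.  (This characterizes the Bernoulli product measure
`μ₀^ι` uniquely.) -/
def IsBernoulliMeasure {ι X₀ : Type*} [MeasurableSpace X₀] (μ₀ : Measure X₀)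
    (μ : Measure (ι → X₀)) : Prop :=
  ∀ (s : Finset ι) (t : ι → Set X₀), (∀ i, MeasurableSet (t i)) →
    μ {x | ∀ i ∈ s, x i ∈ t i} = ∏ i ∈ s, μ₀ (t i)

/-- The class `𝒢` of countable groups `G` such that for every standard probability
space `(X₀, μ₀)` the Bernoulli shift `G ↷ (X₀^G, μ₀^G)` is `𝕋`-cocycle superrigid. -/
def InClassG (G : Type*) [Group G] : Prop :=
  ∀ (X₀ : Type) [MeasurableSpace X₀] [StandardBorelSpace X₀]
    (μ₀ : Measure X₀) [IsProbabilityMeasure μ₀]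
    (μ : Measure (G → X₀)) [IsProbabilityMeasure μ],
    IsBernoulliMeasure μ₀ μ → IsCocycleSuperrigid (bernoulliShift G X₀) μ

end Bernoulli


/-! If the cocycle `(g, x) ↦ (c g) x` attached to `c : G → X̂` is cohomologous to a homomorphism
through `b : X → 𝕋`, then the moduli of the Fourier coefficients of `b` are invariant under the
affine action `χ ↦ g • χ / c g` of `G` on `X̂`. These coefficients are square summable and not all
zero, so some level set of their modulus is a nonempty finite invariant set. When no nontrivial
character has a finite orbit, every point of such a set is fixed, which says that `c` is a
coboundary. For the Bernoulli shift `X̂` is `ℤG/kℤG`, where nonzero elements have infinite orbits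
because `G` is infinite. -/

section AffineAction

lemma exists_eq_div_of_finite_invariant {ι M : Type*} [CommGroup M] (ρ : ι → M →* M)
    (hρ : ∀ d, (Set.range fun i => ρ i d).Finite → d = 1) (c : ι → M) {F : Set M}
    (hF : F.Finite) (hne : F.Nonempty) (hinv : ∀ i, ∀ m ∈ F, ρ i m / c i ∈ F) :
    ∃ m, ∀ i, c i = ρ i m / m := by
  obtain ⟨m, hm⟩ := hne
  refine ⟨m, fun i => ?_⟩
  have horbit : (Set.range fun j => ρ j (ρ i m / c i / m)).Finite := by
    refine (hF.div hF).subset ?_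
    rintro _ ⟨j, rfl⟩
    refine ⟨_, hinv j _ (hinv i m hm), _, hinv j m hm, ?_⟩
    simp only [map_div, div_div_div_cancel_right]
  rw [div_right_comm] at horbit
  exact (div_eq_one.1 (hρ _ horbit)).symm

lemma finite_setOf_eq_of_summable_sq {ι : Type*} {f : ι → ℝ} (hf : Summable fun i => f i ^ 2)
    {r : ℝ} (hr : r ≠ 0) : {i | f i = r}.Finite := by
  have hlt : ∀ᶠ i in Filter.cofinite, f i ^ 2 < r ^ 2 :=
    hf.tendsto_cofinite_zero.eventually (gt_mem_nhds (by positivity))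
  exact (Filter.eventually_cofinite.1 hlt).subset fun i hi => by simp_all

end AffineAction

section CharFourier

variable [AddCommGroup X] [TopologicalSpace X]

/-- A character regarded as a continuous complex-valued function, multiplicatively in the
character. -/
def charToContinuousMap : charGroup X →* C(X, ℂ) where
  toFun χ := ⟨fun x => χ.1 x, continuous_subtype_val.comp χ.2.1⟩
  map_one' := rfl
  map_mul' _ _ := rfl

lemma charToContinuousMap_apply (χ : charGroup X) (x : X) :
    charToContinuousMap χ x = χ.1 x := rfl

lemma star_charToContinuousMap (χ : charGroup X) :
    star (charToContinuousMap χ) = charToContinuousMap χ⁻¹ := by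
  ext x
  exact (Circle.coe_inv_eq_conj _).symm

lemma toSubmodule_adjoin_image_charToContinuousMap (S : Subgroup (charGroup X)) :
    Subalgebra.toSubmodule (Algebra.adjoin ℂ (charToContinuousMap '' (S : Set (charGroup X)))) =
      Submodule.span ℂ (charToContinuousMap '' (S : Set (charGroup X))) := by
  rw [Algebra.adjoin_eq_span]
  exact congrArg (fun T : Submonoid C(X, ℂ) => Submodule.span ℂ (T : Set C(X, ℂ)))
    (Submonoid.closure_eq (S.toSubmonoid.map charToContinuousMap))

lemma span_charToContinuousMap_topologicalClosure_eq_top [CompactSpace X]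
    {S : Subgroup (charGroup X)} (hS : (Subtype.val '' (S : Set (charGroup X))).SeparatesPoints) :
    (Submodule.span ℂ (charToContinuousMap '' (S : Set (charGroup X)))).topologicalClosure = ⊤ := by
  let A : StarSubalgebra ℂ C(X, ℂ) :=
    { toSubalgebra := Algebra.adjoin ℂ (charToContinuousMap '' S)
      star_mem' := by
        change _ ≤ star (Algebra.adjoin ℂ (charToContinuousMap '' (S : Set (charGroup X))))
        refine Algebra.adjoin_le ?_
        rintro _ ⟨χ, hχ, rfl⟩
        exact Algebra.subset_adjoin ⟨χ⁻¹, S.inv_mem hχ, (star_charToContinuousMap χ).symm⟩ }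
  have hA : A.SeparatesPoints := by
    intro x y hxy
    obtain ⟨_, ⟨χ, hχ, rfl⟩, hne⟩ := hS hxy
    exact ⟨_, ⟨charToContinuousMap χ, Algebra.subset_adjoin ⟨χ, hχ, rfl⟩, rfl⟩,
      fun h => hne (Circle.ext h)⟩
  rw [← toSubmodule_adjoin_image_charToContinuousMap]
  exact congr_arg (Subalgebra.toSubmodule <| StarSubalgebra.toSubalgebra ·)
    (ContinuousMap.starSubalgebra_topologicalClosure_eq_top_of_separatesPoints A hA)

variable [MeasurableSpace X] [BorelSpace X]

lemma integral_charToContinuousMap_eq_zero [IsTopologicalAddGroup X] (μ : Measure X)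
    [μ.IsAddLeftInvariant] {χ : charGroup X} (hχ : χ ≠ 1) :
    ∫ x, charToContinuousMap χ x ∂μ = 0 := by
  obtain ⟨y, hy⟩ : ∃ y, χ.1 y ≠ 1 := by
    by_contra! h
    exact hχ (Subtype.ext (funext h))
  have hmul :
      (χ.1 y : ℂ) * ∫ x, charToContinuousMap χ x ∂μ = ∫ x, charToContinuousMap χ x ∂μ := by
    rw [← integral_const_mul, ← integral_add_left_eq_self (μ := μ) (charToContinuousMap χ) y]
    simp only [charToContinuousMap_apply, χ.2.2, Circle.coe_mul]
  by_contra hne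
  exact hy (Circle.ext (by simpa using (mul_eq_right₀ hne).1 hmul))

variable [CompactSpace X] (μ : Measure X) [IsProbabilityMeasure μ]

/-- A character as an element of `L²(X, μ)`. -/
def charLp (χ : charGroup X) : Lp ℂ 2 μ :=
  ContinuousMap.toLp 2 μ ℂ (charToContinuousMap χ)

lemma eq_zero_of_inner_charLp_eq_zero [T2Space X] [μ.WeaklyRegular]
    {S : Subgroup (charGroup X)}
    (hS : (Subtype.val '' (S : Set (charGroup X))).SeparatesPoints) {f : Lp ℂ 2 μ}
    (hf : ∀ χ ∈ S, inner ℂ (charLp μ χ) f = 0) : f = 0 := by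
  have hdense : (Submodule.span ℂ (charLp μ '' S)).topologicalClosure = ⊤ := by
    have h := (ContinuousMap.toLp_denseRange ℂ μ ℂ (p := 2)
      (by simp)).topologicalClosure_map_submodule
        (span_charToContinuousMap_topologicalClosure_eq_top hS)
    rwa [Submodule.map_span, Set.image_image] at h
  have hmem : f ∈ (Submodule.span ℂ (charLp μ '' S))ᗮ := by
    rw [Submodule.mem_orthogonal]
    intro u hu
    have hle : Submodule.span ℂ (charLp μ '' S) ≤ (ℂ ∙ f)ᗮ := by
      rw [Submodule.span_le]
      rintro _ ⟨χ, hχ, rfl⟩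
      exact Submodule.mem_orthogonal_singleton_iff_inner_left.2 (hf χ hχ)
    exact Submodule.mem_orthogonal_singleton_iff_inner_left.1 (hle hu)
  rwa [Submodule.topologicalClosure_eq_top_iff.1 hdense, Submodule.mem_bot] at hmem

lemma orthonormal_charLp [IsTopologicalAddGroup X] [μ.IsAddLeftInvariant] :
    Orthonormal ℂ (charLp μ) := by
  classical
  rw [orthonormal_iff_ite]
  intro χ ψ
  have hinner : inner ℂ (charLp μ χ) (charLp μ ψ) = ∫ x, charToContinuousMap (ψ * χ⁻¹) x ∂μ := by
    rw [charLp, charLp, ContinuousMap.inner_toLp, map_mul, ← star_charToContinuousMap]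
    rfl
  rw [hinner]
  split_ifs with h
  · simp [h]
  · exact integral_charToContinuousMap_eq_zero μ (mul_inv_eq_one.not.2 (Ne.symm h))

end CharFourier

/-- With respect to Haar measure, a character outside `S` would be a unit vector of `L²(X)`
orthogonal to `S`. -/
lemma subgroup_charGroup_eq_top_of_separatesPoints [AddCommGroup X] [TopologicalSpace X]
    [IsTopologicalAddGroup X] [CompactSpace X] [T2Space X] {S : Subgroup (charGroup X)}
    (hS : (Subtype.val '' (S : Set (charGroup X))).SeparatesPoints) : S = ⊤ := by
  borelize X
  let μ : Measure X := Measure.addHaarMeasure ⊤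
  have : IsProbabilityMeasure μ := ⟨Measure.addHaarMeasure_self⟩
  rw [Subgroup.eq_top_iff']
  intro χ
  by_contra hχ
  refine (orthonormal_charLp μ).ne_zero χ (eq_zero_of_inner_charLp_eq_zero μ hS fun ψ hψ => ?_)
  exact (orthonormal_charLp μ).inner_eq_zero fun h => hχ (h ▸ hψ)

section CharCoeff

lemma measurable_circle_coe : Measurable fun z : Circle => (z : ℂ) :=
  Continuous.measurable (f := fun z : Circle => (z : ℂ)) continuous_subtype_val

variable [AddCommGroup X] [TopologicalSpace X] [MeasurableSpace X]

/-- The Fourier coefficient `∫ b χ̄ dμ` of a circle-valued function `b` at the character `χ`. -/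
def charCoeff (μ : Measure X) (b : X → Circle) (χ : charGroup X) : ℂ :=
  ∫ x, ((b x / χ.1 x : Circle) : ℂ) ∂μ

variable [BorelSpace X] [CompactSpace X] (μ : Measure X) [IsProbabilityMeasure μ]

lemma exists_ne_zero_inner_charLp_eq_charCoeff {b : X → Circle} (hb : Measurable b) :
    ∃ f : Lp ℂ 2 μ, f ≠ 0 ∧ ∀ χ, inner ℂ (charLp μ χ) f = charCoeff μ b χ := by
  have hbm : Measurable fun x => (b x : ℂ) := measurable_circle_coe.comp hb
  have hbL : MemLp (fun x => (b x : ℂ)) 2 μ :=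
    .of_bound hbm.aestronglyMeasurable 1 (ae_of_all _ fun x => (Circle.norm_coe (b x)).le)
  refine ⟨hbL.toLp, fun h => ?_, fun χ => ?_⟩
  · have hne : ∀ᵐ _ ∂μ, False := by
      filter_upwards [(MemLp.toLp_eq_toLp_iff hbL MemLp.zero').1 h] with x hx
      exact Circle.coe_ne_zero (b x) hx
    simpa using hne.exists
  · rw [L2.inner_def, charCoeff]
    refine integral_congr_ae ?_
    filter_upwards [(charToContinuousMap χ).coeFn_toLp (p := 2) (𝕜 := ℂ) μ, hbL.coeFn_toLp]
      with x hχ hf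
    rw [charLp, hχ, hf, charToContinuousMap_apply, div_eq_mul_inv, Circle.coe_mul,
      Circle.coe_inv_eq_conj]
    rfl

lemma exists_charCoeff_ne_zero [T2Space X] [μ.WeaklyRegular]
    (hsep : (charGroup X : Set (X → Circle)).SeparatesPoints) {b : X → Circle}
    (hb : Measurable b) : ∃ χ, charCoeff μ b χ ≠ 0 := by
  obtain ⟨f, hf0, hf⟩ := exists_ne_zero_inner_charLp_eq_charCoeff μ hb
  by_contra! h
  refine hf0 (eq_zero_of_inner_charLp_eq_zero (S := ⊤) μ ?_ fun χ _ => by rw [hf, h])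
  simpa using hsep

lemma summable_norm_charCoeff_sq [IsTopologicalAddGroup X] [μ.IsAddLeftInvariant] {b : X → Circle}
    (hb : Measurable b) : Summable fun χ => ‖charCoeff μ b χ‖ ^ 2 := by
  obtain ⟨f, -, hf⟩ := exists_ne_zero_inner_charLp_eq_charCoeff μ hb
  simpa only [hf] using (orthonormal_charLp μ).inner_products_summable f

end CharCoeff

section Rigidity

variable [Group G] [AddCommGroup X] [TopologicalSpace X] {a : G → X → X}

lemma isCocycle1_ind1 [MeasurableSpace X] [OpensMeasurableSpace X] {μ : Measure X}
    {c : G → charGroup X} (hc : c ∈ modZ1 a) : IsCocycle1 a μ (ind1 c) :=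
  ⟨fun g => (c g).2.1.measurable, fun g h => ae_of_all _ fun x => (hc g h x).trans (mul_comm _ _)⟩

namespace IsAlgebraicAction

/-- The dual action `(g • χ) x = χ (g⁻¹ • x)` of `G` on the characters of an algebraic action. -/
def dualAct (ha : IsAlgebraicAction a) (g : G) : charGroup X →* charGroup X where
  toFun χ := ⟨fun x => χ.1 (a g⁻¹ x), χ.2.1.comp (ha.continuous g⁻¹),
    fun x y => by simp only [ha.act_add, χ.2.2]⟩
  map_one' := rfl
  map_mul' _ _ := rfl

lemma mem_modZ1_iff (ha : IsAlgebraicAction a) {c : G → charGroup X} :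
    c ∈ modZ1 a ↔ ∀ g h, c (g * h) = ha.dualAct g (c h) * c g :=
  forall₂_congr fun _ _ => ⟨fun h => Subtype.ext (funext h), fun h x => by rw [h]; rfl⟩

lemma mem_modB1_iff (ha : IsAlgebraicAction a) {c : G → charGroup X} :
    c ∈ modB1 a ↔ ∃ χ, ∀ g, c g = ha.dualAct g χ / χ :=
  exists_congr fun χ => forall_congr' fun g =>
    ⟨fun h => Subtype.ext (funext fun x => by rw [h, ← div_eq_mul_inv]; rfl),
      fun h x => by rw [h, ← div_eq_mul_inv]; rfl⟩

variable [IsTopologicalAddGroup X] [CompactSpace X] [MeasurableSpace X] [BorelSpace X]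
  {μ : Measure X} [IsProbabilityMeasure μ] [μ.IsAddLeftInvariant]

lemma measurePreserving (ha : IsAlgebraicAction a) (g : G) : MeasurePreserving (a g) μ μ := by
  have : μ.IsAddHaarMeasure :=
    Measure.isAddHaarMeasure_of_isCompact_nonempty_interior μ Set.univ isCompact_univ
      (by simp) (by simp) (by simp)
  exact AddMonoidHom.measurePreserving (f := AddMonoidHom.mk' (a g) (ha.act_add g))
    (ha.continuous g) (fun x => ⟨a g⁻¹ x, by simp [← ha.act_mul, ha.act_one]⟩) rfl

lemma norm_charCoeff_dualAct_div (ha : IsAlgebraicAction a) {φ : G →* Circle} {b : X → Circle}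
    (hb : Measurable b) {g : G} {ψ : charGroup X}
    (hψ : ∀ᵐ x ∂μ, ψ.1 x = φ g * (b (a g⁻¹ x) * (b x)⁻¹)) (χ : charGroup X) :
    ‖charCoeff μ b (ha.dualAct g χ / ψ)‖ = ‖charCoeff μ b χ‖ := by
  set F : X → ℂ := fun x => (b x / χ.1 x : Circle)
  have hF : Measurable F := measurable_circle_coe.comp (hb.div χ.2.1.measurable)
  have hcoeff : charCoeff μ b (ha.dualAct g χ / ψ) = φ g * ∫ x, F (a g⁻¹ x) ∂μ := by
    rw [← integral_const_mul]
    refine integral_congr_ae (hψ.mono fun x hx => ?_)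
    have hdiv : b x / (χ.1 (a g⁻¹ x) / ψ.1 x) = φ g * (b (a g⁻¹ x) / χ.1 (a g⁻¹ x)) := by
      rw [hx, div_div_eq_mul_div, ← mul_assoc (φ g), mul_mul_inv_cancel'_right, mul_div_assoc]
    exact (congrArg (fun z : Circle => (z : ℂ)) hdiv).trans (Circle.coe_mul _ _)
  have hshift : ∫ x, F (a g⁻¹ x) ∂μ = charCoeff μ b χ := by
    have hpres := ha.measurePreserving (μ := μ) g⁻¹
    rw [← integral_map hpres.aemeasurable hF.aestronglyMeasurable, hpres.map_eq, charCoeff]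
  rw [hcoeff, hshift, norm_mul, Circle.norm_coe, one_mul]

theorem mem_modB1_of_ind1_mem_measBPsi1 [T2Space X] [μ.WeaklyRegular] (ha : IsAlgebraicAction a)
    (hsep : (charGroup X : Set (X → Circle)).SeparatesPoints)
    (horbit : ∀ χ : charGroup X, (Set.range fun g => ha.dualAct g χ).Finite → χ = 1)
    {c : G → charGroup X} (hc : ind1 c ∈ measBPsi1 a μ) : c ∈ modB1 a := by
  obtain ⟨φ, b, hb, hcob⟩ := hc
  obtain ⟨χ₀, hχ₀⟩ := exists_charCoeff_ne_zero μ hsep hb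
  rw [ha.mem_modB1_iff]
  refine exists_eq_div_of_finite_invariant ha.dualAct horbit c
    (F := {χ | ‖charCoeff μ b χ‖ = ‖charCoeff μ b χ₀‖})
    (finite_setOf_eq_of_summable_sq (summable_norm_charCoeff_sq μ hb) (norm_ne_zero_iff.2 hχ₀))
    ⟨χ₀, rfl⟩ fun g χ hχ => ?_
  exact (ha.norm_charCoeff_dualAct_div hb (hcob g) χ).trans hχ

end IsAlgebraicAction

end Rigidity

section Product

lemma IsBernoulliMeasure.eq_infinitePi {ι X₀ : Type*} [MeasurableSpace X₀] {ν : Measure X₀}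
    [IsProbabilityMeasure ν] {μ : Measure (ι → X₀)} (hμ : IsBernoulliMeasure ν μ) :
    μ = Measure.infinitePi fun _ => ν :=
  Measure.eq_infinitePi _ fun s t ht => (hμ s t ht)

lemma isAddLeftInvariant_infinitePi {ι : Type*} {A : ι → Type*} [∀ i, AddGroup (A i)]
    [∀ i, MeasurableSpace (A i)] [∀ i, MeasurableAdd (A i)] (ν : ∀ i, Measure (A i))
    [∀ i, IsProbabilityMeasure (ν i)] [∀ i, (ν i).IsAddLeftInvariant] :
    (Measure.infinitePi ν).IsAddLeftInvariant := by
  refine ⟨fun y => ?_⟩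
  have h := Measure.infinitePi_map_pi ν fun i => measurable_const_add (y i)
  simp only [map_add_left_eq_self] at h
  exact h

lemma isAddLeftInvariant_of_singleton_eq {A : Type*} [AddGroup A] [Countable A]
    [MeasurableSpace A] [MeasurableSingletonClass A] {ν : Measure A} {r : ENNReal}
    (hν : ∀ i, ν {i} = r) : ν.IsAddLeftInvariant := by
  refine ⟨fun y => Measure.ext_of_singleton fun i => ?_⟩
  rw [Measure.map_apply (measurable_of_countable _) (measurableSet_singleton i),
    show (y + ·) ⁻¹' {i} = {-y + i} by ext; simp [eq_neg_add_iff_add_eq], hν, hν]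

lemma isAlgebraicAction_bernoulliShift (G A : Type*) [Group G] [AddCommGroup A]
    [TopologicalSpace A] : IsAlgebraicAction (bernoulliShift G A) where
  act_one x := by funext; simp [bernoulliShift]
  act_mul g h x := by funext; simp [bernoulliShift, mul_assoc]
  continuous g := continuous_pi fun h => continuous_apply _
  act_add _ _ _ := rfl

end Product

lemma eq_zero_of_finite_range_ofMulAction {R G α : Type*} [Semiring R] [Group G] [MulAction G α]
    (hα : ∀ p : α, (MulAction.orbit G p).Infinite) {m : MonoidAlgebra R α}
    (hm : (Set.range fun g => Representation.ofMulAction R G α g m).Finite) : m = 0 := by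
  by_contra hne
  obtain ⟨p, hp⟩ := Finsupp.ne_iff.1 fun h => hne (MonoidAlgebra.coeff_injective h)
  refine hα p ((hm.biUnion fun n _ => n.coeff.support.finite_toSet).subset ?_)
  rintro _ ⟨g, rfl⟩
  refine Set.mem_biUnion ⟨g, rfl⟩ ?_
  simpa [Representation.coeff_ofMulAction] using hp

section FinDual

variable {k : ℕ} [NeZero k]

/-- The character `x ↦ exp (2πi ∑ h, m h * x h / k)` of `[k]^G` attached to `m ∈ ℤG/kℤG`; the
group structure on `[k] = Fin k` is addition modulo `k`. -/
def finPowChar : Multiplicative (MonoidAlgebra (ZMod k) G) →* charGroup (G → Fin k) where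
  toFun m := ⟨fun x => ZMod.toCircle (m.toAdd.coeff.sum fun h r => r * ZMod.finEquiv k (x h)), by
      refine (continuous_of_discreteTopology (f := ZMod.toCircle (N := k))).comp ?_
      refine continuous_finsetSum _ fun h _ => ?_
      exact (continuous_of_discreteTopology
        (f := fun i : Fin k => m.toAdd.coeff h * ZMod.finEquiv k i)).comp (continuous_apply h),
    fun x y => by
      simp [mul_add, Finsupp.sum_add, AddChar.map_add_eq_mul]⟩
  map_one' := by ext x; simp
  map_mul' m n := by
    ext x
    simp [Finsupp.sum_add_index', add_mul, AddChar.map_add_eq_mul]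

lemma finPowChar_apply (m : Multiplicative (MonoidAlgebra (ZMod k) G)) (x : G → Fin k) :
    (finPowChar m).1 x =
      ZMod.toCircle (m.toAdd.coeff.sum fun h r => r * ZMod.finEquiv k (x h)) := rfl

lemma finPowChar_apply_single [DecidableEq G] (m : Multiplicative (MonoidAlgebra (ZMod k) G))
    (h : G) (i : Fin k) :
    (finPowChar m).1 (Pi.single h i) = ZMod.toCircle (m.toAdd.coeff h * ZMod.finEquiv k i) := by
  rw [finPowChar_apply, Finsupp.sum_eq_single h (fun j _ hj => by simp [hj]) (by simp),
    Pi.single_eq_same]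

lemma finPowChar_injective : Function.Injective (finPowChar (G := G) (k := k)) := by
  classical
  intro m n hmn
  refine Multiplicative.toAdd.injective (MonoidAlgebra.coeff_injective (Finsupp.ext fun h =>
    ZMod.injective_toCircle ?_))
  have heval := congrArg (fun χ : charGroup (G → Fin k) =>
    χ.1 (Pi.single h ((ZMod.finEquiv k).symm 1))) hmn
  simpa only [finPowChar_apply_single, RingEquiv.apply_symm_apply, mul_one] using heval

lemma separatesPoints_range_finPowChar :
    (Subtype.val '' ((finPowChar (G := G) (k := k)).range :
      Set (charGroup (G → Fin k)))).SeparatesPoints := by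
  intro x y hxy
  obtain ⟨h, hh⟩ := Function.ne_iff.1 hxy
  refine ⟨_, ⟨_, ⟨.ofAdd (MonoidAlgebra.single h 1), rfl⟩, rfl⟩, fun heq => hh ?_⟩
  refine (ZMod.finEquiv k).injective (ZMod.injective_toCircle ?_)
  simpa [finPowChar_apply] using heq

lemma finPowChar_surjective : Function.Surjective (finPowChar (G := G) (k := k)) :=
  MonoidHom.range_eq_top.1
    (subgroup_charGroup_eq_top_of_separatesPoints separatesPoints_range_finPowChar)

lemma separatesPoints_charGroup_finPow :
    (charGroup (G → Fin k) : Set ((G → Fin k) → Circle)).SeparatesPoints := by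
  intro x y hxy
  obtain ⟨_, ⟨χ, _, rfl⟩, hχ⟩ := separatesPoints_range_finPowChar hxy
  exact ⟨χ, χ.2, hχ⟩

lemma dualAct_finPowChar [Group G] (g : G) (m : MonoidAlgebra (ZMod k) G) :
    (isAlgebraicAction_bernoulliShift G (Fin k)).dualAct g (finPowChar (.ofAdd m)) =
      finPowChar (.ofAdd (Representation.ofMulAction (ZMod k) G G g m)) := by
  ext x : 2
  have hcoeff : (Representation.ofMulAction (ZMod k) G G g m).coeff =
      m.coeff.mapDomain (g * ·) := by
    simp [Representation.ofMulAction_def]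
  refine (finPowChar_apply (.ofAdd m) _).trans ?_
  simp [finPowChar_apply, bernoulliShift, hcoeff, Finsupp.sum_mapDomain_index, add_mul]

lemma eq_one_of_finite_range_dualAct [Group G] [Infinite G] {χ : charGroup (G → Fin k)}
    (hχ : (Set.range fun g =>
      (isAlgebraicAction_bernoulliShift G (Fin k)).dualAct g χ).Finite) : χ = 1 := by
  obtain ⟨m, rfl⟩ := finPowChar_surjective χ
  have hm : (Set.range fun g => Representation.ofMulAction (ZMod k) G G g m.toAdd).Finite := by
    refine .of_finite_image (hχ.subset ?_)
      (finPowChar_injective.comp Multiplicative.ofAdd.injective).injOn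
    rintro _ ⟨_, ⟨g, rfl⟩, rfl⟩
    exact ⟨g, dualAct_finPowChar g m.toAdd⟩
  have horbit (p : G) : (MulAction.orbit G p).Infinite := by
    rw [MulAction.orbit_eq_univ]
    exact Set.infinite_univ
  exact (congrArg (fun n => finPowChar (.ofAdd n))
    (eq_zero_of_finite_range_ofMulAction horbit hm)).trans (map_one finPowChar)

end FinDual

section H1

variable {G : Type} [Group G] {k : ℕ} [NeZero k]

lemma finPowChar_comp_mem_modZ1 {c : G → MonoidAlgebra (ZMod k) G}
    (hc : c ∈ groupCohomology.cocycles₁ (Rep.ofMulAction (ZMod k) G G)) :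
    (fun g => finPowChar (.ofAdd (c g))) ∈ modZ1 (bernoulliShift G (Fin k)) := by
  rw [(isAlgebraicAction_bernoulliShift G (Fin k)).mem_modZ1_iff]
  intro g h
  have hmul : c (g * h) = Representation.ofMulAction (ZMod k) G G g (c h) + c g :=
    (groupCohomology.mem_cocycles₁_iff (A := Rep.ofMulAction (ZMod k) G G) c).1 hc g h
  rw [dualAct_finPowChar, ← map_mul, hmul, ofAdd_add]

lemma mem_coboundaries₁_of_finPowChar_comp_mem_modB1
    {c : G → MonoidAlgebra (ZMod k) G}
    (hc : (fun g => finPowChar (.ofAdd (c g))) ∈ modB1 (bernoulliShift G (Fin k))) :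
    c ∈ groupCohomology.coboundaries₁ (Rep.ofMulAction (ZMod k) G G) := by
  obtain ⟨χ, hχ⟩ := (isAlgebraicAction_bernoulliShift G (Fin k)).mem_modB1_iff.1 hc
  obtain ⟨m, rfl⟩ := finPowChar_surjective χ
  refine ⟨m.toAdd, funext fun g => ?_⟩
  have h := (hχ g).trans (congrArg (· / finPowChar m) (dualAct_finPowChar g m.toAdd))
  rw [← map_div] at h
  exact (finPowChar_injective h).symm

end H1

/-- Let `G` be countable infinite and `k ≥ 2`.  If the Bernoulli
shift `G ↷ ([k]^G, ν_k^G)` (with `ν_k` the uniform probability measure on the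
`k`-point set `[k] = Fin k`) is `𝕋`-cocycle superrigid, then `H¹(G, ℤG/kℤG) = 0`,
where `ℤG/kℤG` is realized as the group algebra of `G` over `ℤ/kℤ` with the left
regular `G`-action. -/
theorem h1_zg_mod_k_trivial_of_bernoulli_superrigid
    (G : Type) [Group G] [Countable G] [Infinite G]
    (k : ℕ) (hk : 2 ≤ k)
    (ν : Measure (Fin k)) [IsProbabilityMeasure ν] (hunif : ∀ i : Fin k, ν {i} = (k : ENNReal)⁻¹)
    (μ : Measure (G → Fin k)) [IsProbabilityMeasure μ] (hμ : IsBernoulliMeasure ν μ)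
    (hsr : IsCocycleSuperrigid (bernoulliShift G (Fin k)) μ) :
    ∀ x : groupCohomology.H1 (Rep.ofMulAction (ZMod k) G G), x = 0 := by
  have : NeZero k := ⟨by omega⟩
  have : ν.IsAddLeftInvariant := isAddLeftInvariant_of_singleton_eq hunif
  have : μ.IsAddLeftInvariant := hμ.eq_infinitePi ▸ isAddLeftInvariant_infinitePi _
  intro x
  induction x using groupCohomology.H1_induction_on with
  | h c =>
    rw [groupCohomology.H1π_eq_zero_iff]
    have hcoh := hsr _ (isCocycle1_ind1 (finPowChar_comp_mem_modZ1 c.2))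
    exact mem_coboundaries₁_of_finPowChar_comp_mem_modB1
      ((isAlgebraicAction_bernoulliShift G (Fin k)).mem_modB1_of_ind1_mem_measBPsi1
        separatesPoints_charGroup_finPow (fun _ => eq_one_of_finite_range_dualAct) hcoh)

end AlgActCohomology
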